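/- arXiv:2107.14787 — 4 statements merged into one kernel-verified Lean document; each statement's English description precedes it below -/
import Mathlib

section
/- Let G be a finite group whose order is square-free (not divisible by the square of any prime). Then the commutator subgroup G' = [G,G] is cyclic, and the quotient group G/G' is cyclic. -/
theorem stmt12 {G : Type*} [Group G] [Finite G]
    (hsf : Squarefree (Nat.card G)) :
    IsCyclic (commutator G) ∧ IsCyclic (G ⧸ commutator G) := by
  -- Every Sylow subgroup has order `1` or a prime, hence is cyclic: `G` is a Z-group.
  have : IsZGroup G := IsZGroup.of_squarefree hsf
  exact ⟨IsZGroup.isCyclic_commutator G, IsZGroup.isCyclic_abelianization⟩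
end

section
/- Let G be a finite group whose order is square-free (not divisible by the square of any prime). Then G' ∩ Z(G) = {e}, where G' = [G,G] is the commutator subgroup and Z(G) is the centre of G. -/
/-! The transfer `G →* Z(G)` into the centre is the map `g ↦ g ^ [G : Z(G)]`; its target is
abelian, so it kills `G'`. An element of `G' ∩ Z(G)` therefore has order dividing `[G : Z(G)]`,
and also dividing `|Z(G)|`. The product of these two numbers is the square-free number `|G|`,
so they are coprime and the element is trivial. -/

theorem commutator_le_ker_transferCenterPow (G : Type*) [Group G] [Finite G] :
    commutator G ≤ (MonoidHom.transferCenterPow G).ker := by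
  rw [commutator_def, Subgroup.commutator_le]
  intro a _ b _
  rw [MonoidHom.mem_ker, map_commutatorElement, commutatorElement_eq_one_iff_mul_comm]
  exact Subtype.ext (Subgroup.mem_center_iff.mp (MonoidHom.transferCenterPow G b).2 _)

theorem stmt13 {G : Type*} [Group G] [Finite G]
    (hsf : Squarefree (Nat.card G)) :
    commutator G ⊓ Subgroup.center G = ⊥ := by
  rw [eq_bot_iff]
  rintro x ⟨hx, hz⟩
  have h1 : x ^ (Subgroup.center G).index = 1 := by
    have h : x ∈ (MonoidHom.transferCenterPow G).ker :=
      commutator_le_ker_transferCenterPow G hx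
    rw [← MonoidHom.transferCenterPow_apply, MonoidHom.mem_ker.mp h, Subgroup.coe_one]
  have hcop : (Nat.card (Subgroup.center G)).Coprime (Subgroup.center G).index := by
    rw [← (Subgroup.center G).card_mul_index] at hsf
    exact Nat.coprime_of_squarefree_mul hsf
  exact Subgroup.mem_bot.mpr <| orderOf_eq_one_iff.mp <|
    Nat.eq_one_of_dvd_coprimes hcop (Subgroup.orderOf_dvd_natCard _ hz)
      (orderOf_dvd_of_pow_eq_one h1)
end

section
/- Let G be a finite group whose order is square-free (not divisible by the square of any prime), and let a ∈ G be an element such that a together with the commutator subgroup G' = [G,G] generates G (i.e., ⟨a, G'⟩ = G). Then a does not commute with any nontrivial element of G': if γ ∈ G' and aγ = γa, then γ = e. -/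
/-!
A group of square-free order is a Z-group (its Sylow subgroups are cyclic), so `G'` is cyclic, in
particular abelian. Hence `φ : g ↦ a * g * a⁻¹ * g⁻¹` is an endomorphism of `G'`. Its range `N` is
centralized by `G'` and normalized by `a`, so it is normal in `G = ⟨a, G'⟩`; modulo `N` the
generators `a` and `G'` commute with each other, so `G ⧸ N` is abelian and `G' ≤ N`. Thus `φ` is
surjective, hence injective because `G'` is finite, and its kernel consists of the elements of `G'`
commuting with `a`.
-/

open scoped commutatorElement in
/-- If `G` is generated by `a` and `G'`, with `G'` abelian, then every element of `G'` is a
commutator of `a` with an element of `G'`. -/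
theorem exists_commutator_eq_of_closure_insert_eq_top {G : Type*} [Group G] (a : G)
    (ha : Subgroup.closure (insert a (commutator G : Set G)) = ⊤)
    (hab : ∀ x ∈ commutator G, ∀ y ∈ commutator G, x * y = y * x) :
    ∀ γ ∈ commutator G, ∃ g ∈ commutator G, a * g * a⁻¹ * g⁻¹ = γ := by
  have gen : ∀ H : Subgroup G, a ∈ H → commutator G ≤ H → H = ⊤ := by
    intro H h1 h2
    rw [eq_top_iff, ← ha, Subgroup.closure_le]
    exact Set.insert_subset h1 h2
  have hconj : ∀ g ∈ commutator G, a * g * a⁻¹ ∈ commutator G := fun g hg =>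
    Subgroup.Normal.conj_mem inferInstance g hg a
  have hN_le : ∀ g ∈ commutator G, a * g * a⁻¹ * g⁻¹ ∈ commutator G := fun g hg =>
    mul_mem (hconj g hg) (inv_mem hg)
  let φ : commutator G →* G :=
    { toFun := fun g => a * g * a⁻¹ * (g : G)⁻¹
      map_one' := by simp
      map_mul' := by
        rintro ⟨x, hx⟩ ⟨y, hy⟩
        have h := hab x⁻¹ (inv_mem hx) _ (hN_le y hy)
        calc a * (x * y) * a⁻¹ * (x * y)⁻¹
            = a * x * a⁻¹ * ((a * y * a⁻¹ * y⁻¹) * x⁻¹) := by group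
          _ = a * x * a⁻¹ * x⁻¹ * (a * y * a⁻¹ * y⁻¹) := by rw [← h]; group }
  have hφ : ∀ g : commutator G, φ g = a * g * a⁻¹ * (g : G)⁻¹ := fun _ => rfl
  have hnorm : Subgroup.normalizer (φ.range : Set G) = ⊤ := by
    have hmap : ∀ x ∈ φ.range, a * x * a⁻¹ ∈ φ.range := by
      rintro _ ⟨g, rfl⟩
      refine ⟨⟨_, hconj g g.2⟩, ?_⟩
      simp only [hφ]
      group
    have hmap' : ∀ x ∈ φ.range, a⁻¹ * x * a ∈ φ.range := by
      rintro _ ⟨g, rfl⟩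
      have h : a⁻¹ * (g : G) * a ∈ commutator G := by
        simpa using Subgroup.Normal.conj_mem inferInstance (g : G) g.2 a⁻¹
      refine ⟨⟨_, h⟩, ?_⟩
      simp only [hφ]
      group
    apply gen
    · rw [Subgroup.mem_normalizer_iff]
      refine fun x => ⟨hmap x, fun h => ?_⟩
      have := hmap' _ h
      simpa [mul_assoc] using this
    · refine le_trans ?_ (Subgroup.centralizer_le_normalizer _)
      intro x hx
      rw [Subgroup.mem_centralizer_iff]
      rintro _ ⟨g, rfl⟩
      exact hab _ (hN_le g g.2) _ hx
  have hn : φ.range.Normal := Subgroup.normalizer_eq_top_iff.mp hnorm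
  let π := QuotientGroup.mk' φ.range
  have hcomm : ∀ g ∈ commutator G, π a * π g = π g * π a := by
    intro g hg
    have h : π (a * g * a⁻¹ * g⁻¹) = 1 :=
      (QuotientGroup.eq_one_iff _).mpr ⟨⟨g, hg⟩, rfl⟩
    rw [map_mul, map_mul, map_mul, map_inv, map_inv, mul_inv_eq_one, mul_inv_eq_iff_eq_mul] at h
    exact h
  have hcen : (Subgroup.center (G ⧸ φ.range)).comap π = ⊤ := by
    -- An element of `G ⧸ N` is central once it commutes with the images of all generators.
    have key : ∀ z : G, π z * π a = π a * π z →
        (∀ g ∈ commutator G, π z * π g = π g * π z) →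
        z ∈ (Subgroup.center (G ⧸ φ.range)).comap π := by
      intro z h1 h2
      have : (Subgroup.centralizer {π z}).comap π = ⊤ := by
        apply gen
        · rw [Subgroup.mem_comap, Subgroup.mem_centralizer_singleton_iff]
          exact h1.symm
        · intro g hg
          rw [Subgroup.mem_comap, Subgroup.mem_centralizer_singleton_iff]
          exact (h2 g hg).symm
      rw [Subgroup.mem_comap, Subgroup.mem_center_iff]
      intro y
      obtain ⟨y, rfl⟩ := QuotientGroup.mk'_surjective _ y
      have hy : y ∈ (Subgroup.centralizer {π z}).comap π := this ▸ Subgroup.mem_top y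
      rwa [Subgroup.mem_comap, Subgroup.mem_centralizer_singleton_iff] at hy
    apply gen
    · exact key a rfl hcomm
    · intro g hg
      refine key g (hcomm g hg).symm fun y hy => ?_
      rw [← map_mul, hab g hg y hy, map_mul]
  have hle : commutator G ≤ φ.range := by
    refine Subgroup.commutator_le.mpr ?_
    intro x _ y _
    have hx : x ∈ (Subgroup.center (G ⧸ φ.range)).comap π := hcen ▸ Subgroup.mem_top x
    rw [← QuotientGroup.eq_one_iff]
    change π ⁅x, y⁆ = 1
    rw [map_commutatorElement, commutatorElement_eq_one_iff_mul_comm]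
    exact ((Subgroup.mem_center_iff.mp hx) (π y)).symm
  intro γ hγ
  obtain ⟨g, hg⟩ := hle hγ
  exact ⟨g, g.2, hg⟩

theorem stmt14 {G : Type*} [Group G] [Finite G]
    (hsf : Squarefree (Nat.card G))
    (a : G) (ha : Subgroup.closure (insert a (commutator G : Set G)) = ⊤) :
    ∀ γ ∈ commutator G, a * γ = γ * a → γ = 1 := by
  have : IsZGroup G := IsZGroup.of_squarefree hsf
  have hcyc : IsCyclic (commutator G) := IsZGroup.isCyclic_commutator G
  have hab : ∀ x ∈ commutator G, ∀ y ∈ commutator G, x * y = y * x := by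
    intro x hx y hy
    exact congrArg Subtype.val
      ((IsCyclic.isMulCommutative (α := commutator G)).is_comm.comm ⟨x, hx⟩ ⟨y, hy⟩)
  let f : commutator G → commutator G := fun g =>
    ⟨a * g * a⁻¹ * (g : G)⁻¹,
      mul_mem (Subgroup.Normal.conj_mem inferInstance _ g.2 a) (inv_mem g.2)⟩
  have hsurj : Function.Surjective f := by
    rintro ⟨γ, hγ⟩
    obtain ⟨g, hg, h⟩ := exists_commutator_eq_of_closure_insert_eq_top a ha hab γ hγ
    exact ⟨⟨g, hg⟩, Subtype.ext h⟩
  have hinj : Function.Injective f := Finite.injective_iff_surjective.mpr hsurj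
  intro γ hγ h
  have h1 : f ⟨γ, hγ⟩ = f 1 := by
    apply Subtype.ext
    simp [f, h]
  exact congrArg Subtype.val (hinj h1)
end

section
/- Let G be a finite group whose order is square-free (not divisible by the square of any prime), and let a ∈ G be an element such that a together with the commutator subgroup G' = [G,G] generates G (i.e., ⟨a, G'⟩ = G). Then the order of a equals |G/G'|, the index of G' in G. -/
/-!
A finite group `G` of square-free order has cyclic Sylow subgroups, hence a cyclic commutator
subgroup `G'`; only the commutativity of `G'` matters below.

Since `a` and `G'` generate `G`, the image of `a` generates `G ⧸ G'`, so `m = |G ⧸ G'|` divides the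
order of `a`. Conversely `a ^ m` lies in `G'` and commutes with `a`, so it suffices that `a`
centralizes no nontrivial element of `G'` (`eq_one_of_mem_commutator_of_commute`). As `G'` is
abelian, `x ↦ a x a⁻¹ x⁻¹` is an endomorphism of `G'` (`commHom`) whose kernel is the centralizer
of `a` in `G'`. Its range is normal in `G`, and modulo it `a` and `G'` commute, so the quotient is
abelian and the range is all of `G'`. By finiteness the endomorphism is injective.
-/

/-- The endomorphism `x ↦ a x a⁻¹ x⁻¹` of an abelian commutator subgroup. -/
def commHom {G : Type*} [Group G] (a : G)
    (hc : ∀ x ∈ commutator G, ∀ y ∈ commutator G, x * y = y * x) :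
    commutator G →* commutator G where
  toFun x := ⟨a * x * a⁻¹ * (x : G)⁻¹,
    mul_mem (Subgroup.Normal.conj_mem inferInstance _ x.2 a) (inv_mem x.2)⟩
  map_one' := by ext; simp
  map_mul' x y := by
    ext
    have h1 := hc _ (inv_mem x.2) _ (mul_mem
      (Subgroup.Normal.conj_mem (inferInstance : (commutator G).Normal) _ y.2 a) (inv_mem y.2))
    have h2 := hc _ (inv_mem x.2) _ (inv_mem y.2)
    simp only [Subgroup.coe_mul, mul_inv_rev]
    calc a * (x * y) * a⁻¹ * ((y : G)⁻¹ * (x : G)⁻¹)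
        = a * x * a⁻¹ * ((a * y * a⁻¹ * (y : G)⁻¹) * (x : G)⁻¹) := by group
      _ = a * x * a⁻¹ * (x : G)⁻¹ * (a * y * a⁻¹ * (y : G)⁻¹) := by rw [← h1]; group

/-- The range of `commHom` is normal in `G` with abelian quotient, hence contains `G'`. -/
theorem commHom_surjective {G : Type*} [Group G] (a : G)
    (hc : ∀ x ∈ commutator G, ∀ y ∈ commutator G, x * y = y * x)
    (ha : Subgroup.closure (insert a (commutator G : Set G)) = ⊤) :
    Function.Surjective (commHom a hc) := by
  let K : Subgroup G := (commHom a hc).range.map (commutator G).subtype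
  have hN : (commutator G).Normal := inferInstance
  have memK : ∀ g, g ∈ K ↔ ∃ x ∈ commutator G, a * x * a⁻¹ * x⁻¹ = g := by
    intro g
    constructor
    · rintro ⟨_, ⟨x, rfl⟩, rfl⟩
      exact ⟨x, x.2, rfl⟩
    · rintro ⟨x, hx, rfl⟩
      exact ⟨_, ⟨⟨x, hx⟩, rfl⟩, rfl⟩
  have hKN : K ≤ commutator G := Subgroup.map_subtype_le _
  have hK : K.Normal := by
    rw [← Subgroup.normalizer_eq_top_iff, eq_top_iff, ← ha, Subgroup.closure_le]
    rintro g (rfl | hg)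
    · -- Conjugating `[g, x]` by `g` gives `[g, g x g⁻¹]`.
      refine Subgroup.mem_normalizer_iff.2 fun h => ⟨fun hh => ?_, fun hh => ?_⟩
      · obtain ⟨x, hx, rfl⟩ := (memK h).1 hh
        exact (memK _).2 ⟨g * x * g⁻¹, hN.conj_mem _ hx g, by group⟩
      · obtain ⟨x, hx, e⟩ := (memK _).1 hh
        refine (memK _).2 ⟨g⁻¹ * x * g, by simpa using hN.conj_mem _ hx g⁻¹, ?_⟩
        have : h = g⁻¹ * (g * h * g⁻¹) * g := by group
        rw [this, ← e]
        group
    · refine Subgroup.mem_normalizer_iff.2 fun h => ⟨fun hh => ?_, fun hh => ?_⟩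
      · rwa [hc g hg h (hKN hh), mul_inv_cancel_right]
      · have h1 : h ∈ commutator G := by
          simpa [mul_assoc] using hN.conj_mem _ (hKN hh) g⁻¹
        rwa [hc g hg h h1, mul_inv_cancel_right] at hh
  have key : ∀ x ∈ commutator G, (QuotientGroup.mk' K a) * QuotientGroup.mk' K x =
      QuotientGroup.mk' K x * QuotientGroup.mk' K a := by
    intro x hx
    have h1 : QuotientGroup.mk' K (a * x * a⁻¹ * x⁻¹) = 1 :=
      (QuotientGroup.eq_one_iff _).2 ((memK _).2 ⟨x, hx, rfl⟩)
    simp only [map_mul, map_inv] at h1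
    rw [mul_inv_eq_one, mul_inv_eq_iff_eq_mul] at h1
    exact h1
  have hcomm : ∀ g h : G, QuotientGroup.mk' K g * QuotientGroup.mk' K h =
      QuotientGroup.mk' K h * QuotientGroup.mk' K g := by
    have step : ∀ g ∈ insert a (commutator G : Set G), ∀ h : G,
        Commute (QuotientGroup.mk' K g) (QuotientGroup.mk' K h) := by
      intro g hg h
      have hh : h ∈ Subgroup.closure (insert a (commutator G : Set G)) := ha ▸ Subgroup.mem_top h
      induction hh using Subgroup.closure_induction with
      | mem y hy =>
        rcases hg with rfl | hg <;> rcases hy with rfl | hy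
        · exact Commute.refl _
        · exact key y hy
        · exact (key g hg).symm
        · show _ * _ = _ * _
          rw [← map_mul, hc g hg y hy, map_mul]
      | one => rw [map_one]; exact Commute.one_right _
      | mul y z _ _ h1 h2 => rw [map_mul]; exact h1.mul_right h2
      | inv y _ h1 => rw [map_inv]; exact h1.inv_right
    intro g h
    have hh : g ∈ Subgroup.closure (insert a (commutator G : Set G)) := ha ▸ Subgroup.mem_top g
    change Commute _ _
    induction hh using Subgroup.closure_induction with
    | mem y hy => exact step y hy h
    | one => rw [map_one]; exact Commute.one_left _
    | mul y z _ _ h1 h2 => rw [map_mul]; exact h1.mul_left h2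
    | inv y _ h1 => rw [map_inv]; exact h1.inv_left
  have hle : commutator G ≤ K := by
    rw [commutator_def, Subgroup.commutator_le]
    intro g _ h _
    rw [← QuotientGroup.eq_one_iff, ← QuotientGroup.mk'_apply, map_commutatorElement,
      commutatorElement_eq_one_iff_mul_comm]
    exact hcomm g h
  rintro ⟨g, hg⟩
  obtain ⟨x, hx, e⟩ := (memK g).1 (hle hg)
  exact ⟨⟨x, hx⟩, Subtype.ext e⟩

theorem eq_one_of_mem_commutator_of_commute {G : Type*} [Group G] [Finite G] (a : G)
    (hc : ∀ x ∈ commutator G, ∀ y ∈ commutator G, x * y = y * x)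
    (ha : Subgroup.closure (insert a (commutator G : Set G)) = ⊤)
    (c : G) (hcN : c ∈ commutator G) (hac : Commute a c) : c = 1 := by
  have hinj := Finite.injective_iff_surjective.2 (commHom_surjective a hc ha)
  have h : commHom a hc ⟨c, hcN⟩ = commHom a hc 1 := by
    rw [map_one]
    ext
    simp [commHom, hac.eq]
  simpa using congrArg Subtype.val (hinj h)

theorem stmt15 {G : Type*} [Group G] [Finite G]
    (hsf : Squarefree (Nat.card G))
    (a : G) (ha : Subgroup.closure (insert a (commutator G : Set G)) = ⊤) :
    orderOf a = Nat.card (G ⧸ commutator G) := by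
  have hZ : IsZGroup G := IsZGroup.of_squarefree hsf
  have hcyc : IsCyclic (commutator G) := IsZGroup.isCyclic_commutator G
  have hc : ∀ x ∈ commutator G, ∀ y ∈ commutator G, x * y = y * x := by
    intro x hx y hy
    let _ : CommGroup (commutator G) := IsCyclic.commGroup
    exact congrArg Subtype.val (mul_comm (⟨x, hx⟩ : commutator G) ⟨y, hy⟩)
  apply Nat.dvd_antisymm
  · rw [orderOf_dvd_iff_pow_eq_one]
    refine eq_one_of_mem_commutator_of_commute a hc ha _ ?_ ((Commute.refl a).pow_right _)
    rw [← QuotientGroup.eq_one_iff, QuotientGroup.mk_pow]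
    exact pow_card_eq_one'
  · have htop : Subgroup.zpowers (QuotientGroup.mk' (commutator G) a) = ⊤ := by
      rw [← MonoidHom.range_eq_top.2 (QuotientGroup.mk'_surjective (commutator G)),
        MonoidHom.range_eq_map, ← ha, MonoidHom.map_closure]
      apply le_antisymm
      · rw [Subgroup.zpowers_le]
        exact Subgroup.subset_closure ⟨a, Set.mem_insert _ _, rfl⟩
      · rw [Subgroup.closure_le]
        rintro _ ⟨y, rfl | hy, rfl⟩
        · exact Subgroup.mem_zpowers _
        · have : QuotientGroup.mk' (commutator G) y = 1 := (QuotientGroup.eq_one_iff y).2 hy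
          rw [this]
          exact one_mem _
    have h1 : orderOf (QuotientGroup.mk' (commutator G) a) = Nat.card (G ⧸ commutator G) := by
      rw [← Nat.card_zpowers, htop, Subgroup.card_top]
    rw [← h1]
    exact orderOf_map_dvd _ a
end
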